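/- Let G be a prolific graph with minimum degree δ(G) ≥ 4. Then γ(L^2(G)) > γ(G), where γ denotes the domination number. -/

import Mathlib

open SimpleGraph

/-- A bundled simple graph: a vertex type together with a simple graph on it. -/
structure FGraph where
  V : Type
  G : SimpleGraph V

/-- The line graph of a bundled graph: the vertices are the edges of `G`, two distinct
edges being adjacent iff they share an endpoint. -/
def FGraph.line (X : FGraph) : FGraph := ⟨X.G.edgeSet, X.G.lineGraph⟩

/-- The `k`-fold iterated line graph `L^k(G)`. -/
def FGraph.iter (X : FGraph) (k : ℕ) : FGraph := FGraph.line^[k] X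

/-- The number of vertices `n(G)`. -/
noncomputable def FGraph.n (X : FGraph) : ℕ := Nat.card X.V

/-- The number of edges `e(G)`. -/
noncomputable def FGraph.e (X : FGraph) : ℕ := Nat.card X.G.edgeSet

/-- The degree of a vertex. -/
noncomputable def FGraph.deg (X : FGraph) (v : X.V) : ℕ := Nat.card (X.G.neighborSet v)

/-- The maximum degree `Δ(G)`. -/
noncomputable def FGraph.maxDeg (X : FGraph) : ℕ := sSup (Set.range X.deg)

/-- The minimum degree `δ(G)`. -/
noncomputable def FGraph.minDeg (X : FGraph) : ℕ := sInf (Set.range X.deg)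

/-- The average degree `d(G) = 2e(G)/n(G)`, as a rational number. -/
noncomputable def FGraph.avgDeg (X : FGraph) : ℚ := 2 * (X.e : ℚ) / (X.n : ℚ)

/-- A graph is prolific if it is connected and isomorphic to no path graph `P_k`,
to no cycle graph `C_k`, and not to the star `K_{1,3}`. -/
def FGraph.Prolific (X : FGraph) : Prop :=
  X.G.Connected ∧
  (∀ k : ℕ, IsEmpty (X.G ≃g pathGraph k)) ∧
  (∀ k : ℕ, IsEmpty (X.G ≃g cycleGraph k)) ∧
  IsEmpty (X.G ≃g completeBipartiteGraph (Fin 1) (Fin 3))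

/-- The domination number `γ(G)`: the minimum size of a set `S` of vertices such that
every vertex is in `S` or adjacent to a vertex of `S`. -/
noncomputable def FGraph.domNum (X : FGraph) : ℕ :=
  sInf {k | ∃ S : Set X.V, (∀ v : X.V, v ∈ S ∨ ∃ u ∈ S, X.G.Adj u v) ∧ S.ncard = k}

/-!
Write `γ` for the domination number and `τ` for the vertex cover number.

* The edges of a dominating set of `L(G)` meet every edge of `G`, so their endpoints cover `G`:
  `τ(G) ≤ 2 γ(L(G))`.
* The edges outside a vertex cover of `L(G)` form a matching of `G`, so `2 e(G) ≤ 2 τ(L(G)) + n(G)`.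

Hence `δ(G) n(G) ≤ 2 e(G) ≤ 4 γ(L²(G)) + n(G)`, and `δ(G) ≥ 4` gives `γ(L²(G)) ≥ 3 n(G) / 4`. As `G`
has no isolated vertex, the complement of a minimum dominating set dominates `G` as well, so
`γ(G) ≤ n(G) / 2`.
-/

open Finset

section DominatingSets

variable {V : Type*} {G : SimpleGraph V}

/-- Dominating sets of vertices of `G`, unbundled from the definition of `FGraph.domNum`. -/
def IsDominating (G : SimpleGraph V) (S : Set V) : Prop :=
  ∀ v, v ∈ S ∨ ∃ u ∈ S, G.Adj u v

theorem isDominating_univ : IsDominating G Set.univ := fun v ↦ Or.inl (Set.mem_univ v)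

theorem IsDominating.sdiff_singleton {S : Set V} {v : V} (hS : IsDominating G S)
    (hne : (G.neighborSet v).Nonempty) (hsub : G.neighborSet v ⊆ S) :
    IsDominating G (S \ {v}) := by
  intro w
  by_cases hwv : w = v
  · obtain ⟨u, hvu⟩ := hne
    rw [hwv]
    exact Or.inr ⟨u, ⟨hsub hvu, hvu.ne'⟩, hvu.symm⟩
  by_cases hwS : w ∈ S
  · exact Or.inl ⟨hwS, hwv⟩
  obtain ⟨u, huS, huw⟩ := (hS w).resolve_left hwS
  have huv : u ≠ v := by
    rintro rfl
    exact hwS (hsub huw)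
  exact Or.inr ⟨u, ⟨huS, huv⟩, huw⟩

theorem isDominating_compl_of_minimal {S : Set V} (hS : Minimal (IsDominating G) S)
    (hG : ∀ v, (G.neighborSet v).Nonempty) : IsDominating G Sᶜ := by
  intro v
  by_contra! ⟨hvS, hv⟩
  have hsub : G.neighborSet v ⊆ S := fun u hvu ↦ by
    by_contra huS
    exact hv u huS hvu.symm
  have hle : S ⊆ S \ {v} :=
    hS.le_of_le (hS.prop.sdiff_singleton (hG v) hsub) Set.sdiff_subset
  exact (hle (not_not.mp hvS)).2 rfl

end DominatingSets

section Endpoints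

variable {V : Type*} {G : SimpleGraph V} [DecidableEq V]

/-- The set of endpoints of a finite set of edges, the edges being taken as vertices of the line
graph. -/
def endpoints (S : Finset G.edgeSet) : Finset V :=
  S.biUnion fun e ↦ (e : Sym2 V).toFinset

theorem mem_endpoints {S : Finset G.edgeSet} {v : V} :
    v ∈ endpoints S ↔ ∃ e ∈ S, v ∈ (e : Sym2 V) := by
  simp [endpoints]

theorem card_toFinset_edge (e : G.edgeSet) : #(e : Sym2 V).toFinset = 2 :=
  Sym2.card_toFinset_of_not_isDiag _ (G.not_isDiag_of_mem_edgeSet e.2)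

theorem card_endpoints_le (S : Finset G.edgeSet) : #(endpoints S) ≤ 2 * #S := by
  rw [mul_comm]
  exact card_biUnion_le_card_mul _ _ _ fun e _ ↦ (card_toFinset_edge e).le

theorem card_endpoints_of_isIndepSet {M : Finset G.edgeSet}
    (hM : G.lineGraph.IsIndepSet (M : Set G.edgeSet)) : #(endpoints M) = 2 * #M := by
  have hdisj : (M : Set G.edgeSet).PairwiseDisjoint fun e ↦ (e : Sym2 V).toFinset := by
    intro e he f hf hne
    refine Finset.disjoint_left.mpr fun v hve hvf ↦ hM he hf hne ?_
    exact lineGraph_adj_iff_exists.mpr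
      ⟨hne, v, Sym2.mem_toFinset.mp hve, Sym2.mem_toFinset.mp hvf⟩
  rw [endpoints, card_biUnion hdisj, sum_const_nat fun e _ ↦ card_toFinset_edge e, mul_comm]

theorem IsDominating.isVertexCover_endpoints {S : Finset G.edgeSet}
    (hS : IsDominating G.lineGraph (S : Set G.edgeSet)) :
    G.IsVertexCover (endpoints S : Set V) := by
  intro v w hvw
  simp only [mem_coe, mem_endpoints]
  rcases hS ⟨s(v, w), hvw⟩ with hmem | ⟨e, he, hadj⟩
  · exact Or.inl ⟨_, hmem, Sym2.mem_mk_left v w⟩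
  · obtain ⟨-, x, hxe, hx⟩ := lineGraph_adj_iff_exists.mp hadj
    rcases Sym2.mem_iff.mp hx with rfl | rfl
    · exact Or.inl ⟨e, he, hxe⟩
    · exact Or.inr ⟨e, he, hxe⟩

end Endpoints

theorem two_mul_card_edgeSet_le_vertexCoverNum_lineGraph {V : Type*} [Finite V]
    (G : SimpleGraph V) :
    (2 * Nat.card G.edgeSet : ℕ∞) ≤ 2 * G.lineGraph.vertexCoverNum + Nat.card V := by
  classical
  have := Fintype.ofFinite V
  obtain ⟨C, hcard, hC⟩ := vertexCoverNum_exists G.lineGraph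
  lift C to Finset G.edgeSet using C.toFinite
  have hmatching : 2 * #Cᶜ ≤ Fintype.card V := by
    have hindep : G.lineGraph.IsIndepSet ((Cᶜ : Finset G.edgeSet) : Set G.edgeSet) := by
      simpa using hC
    rw [← card_endpoints_of_isIndepSet hindep]
    exact card_le_univ _
  have hsplit : #C + #Cᶜ = Fintype.card G.edgeSet := card_add_card_compl C
  rw [← hcard, Set.encard_coe_eq_coe_finsetCard, Nat.card_eq_fintype_card,
    Nat.card_eq_fintype_card]
  norm_cast
  lia

namespace FGraph

variable (X : FGraph)

theorem minDeg_le_deg (v : X.V) : X.minDeg ≤ X.deg v :=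
  Nat.sInf_le ⟨v, rfl⟩

theorem nonempty_of_minDeg_pos {X : FGraph} (h : 0 < X.minDeg) : Nonempty X.V :=
  Set.range_nonempty_iff_nonempty.mp (Nat.nonempty_of_pos_sInf h)

theorem neighborSet_nonempty_of_minDeg_pos {X : FGraph} (h : 0 < X.minDeg) (v : X.V) :
    (X.G.neighborSet v).Nonempty :=
  Set.nonempty_coe_sort.mp (Nat.card_pos_iff.mp (h.trans_le (X.minDeg_le_deg v))).1

theorem exists_isDominating_ncard_eq_domNum :
    ∃ S : Set X.V, IsDominating X.G S ∧ S.ncard = X.domNum :=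
  Nat.sInf_mem (s := {k | ∃ S : Set X.V, IsDominating X.G S ∧ S.ncard = k})
    ⟨_, Set.univ, isDominating_univ, rfl⟩

variable {X} in
theorem domNum_le_ncard {S : Set X.V} (hS : IsDominating X.G S) : X.domNum ≤ S.ncard :=
  Nat.sInf_le ⟨S, hS, rfl⟩

variable [Finite X.V]

instance : Finite X.line.V := inferInstanceAs (Finite X.G.edgeSet)

theorem exists_finset_isDominating_card_eq_domNum :
    ∃ S : Finset X.V, IsDominating X.G (S : Set X.V) ∧ #S = X.domNum := by
  obtain ⟨S, hS, hcard⟩ := X.exists_isDominating_ncard_eq_domNum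
  lift S to Finset X.V using S.toFinite
  exact ⟨S, hS, (Set.ncard_coe_finset S).symm.trans hcard⟩

theorem minDeg_mul_n_le_two_mul_e : X.minDeg * X.n ≤ 2 * X.e := by
  classical
  have := Fintype.ofFinite X.V
  have hdeg (v : X.V) : X.deg v = X.G.degree v := by
    rw [deg, Nat.card_eq_fintype_card, card_neighborSet_eq_degree]
  calc X.minDeg * X.n = ∑ _v : X.V, X.minDeg := by simp [n, mul_comm]
    _ ≤ ∑ v, X.G.degree v := sum_le_sum fun v _ ↦ (X.minDeg_le_deg v).trans_eq (hdeg v)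
    _ = 2 * #X.G.edgeFinset := X.G.sum_degrees_eq_twice_card_edges
    _ = 2 * X.e := by rw [e, Nat.card_eq_fintype_card, edgeFinset_card]

variable {X} in
theorem two_mul_domNum_le_n (hX : ∀ v, (X.G.neighborSet v).Nonempty) :
    2 * X.domNum ≤ X.n := by
  obtain ⟨S, hS, hcard⟩ := X.exists_isDominating_ncard_eq_domNum
  have hmin : Minimal (IsDominating X.G) S := by
    refine ⟨hS, fun T hT hTS ↦ ?_⟩
    exact (Set.eq_of_subset_of_ncard_le hTS (hcard.trans_le (domNum_le_ncard hT))).ge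
  have hcompl : X.domNum ≤ Sᶜ.ncard :=
    domNum_le_ncard (isDominating_compl_of_minimal hmin hX)
  have hsplit : S.ncard + Sᶜ.ncard = X.n := Set.ncard_add_ncard_compl S
  lia

theorem vertexCoverNum_le_two_mul_domNum_line :
    X.G.vertexCoverNum ≤ 2 * X.line.domNum := by
  classical
  obtain ⟨S, hS, hcard⟩ : ∃ S : Finset X.G.edgeSet,
      IsDominating X.G.lineGraph (S : Set X.G.edgeSet) ∧ #S = X.line.domNum :=
    X.line.exists_finset_isDominating_card_eq_domNum
  calc X.G.vertexCoverNum ≤ (endpoints S : Set X.V).encard :=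
        hS.isVertexCover_endpoints.vertexCoverNum_le
    _ = #(endpoints S) := Set.encard_coe_eq_coe_finsetCard _
    _ ≤ 2 * X.line.domNum := by
        rw [← hcard]
        exact_mod_cast card_endpoints_le S

theorem two_mul_e_le_four_mul_domNum_iter_two_add_n :
    2 * X.e ≤ 4 * (X.iter 2).domNum + X.n := by
  have h : (2 * X.e : ℕ∞) ≤ 2 * (2 * (X.iter 2).domNum) + X.n :=
    calc (2 * X.e : ℕ∞) ≤ 2 * X.line.G.vertexCoverNum + X.n :=
          two_mul_card_edgeSet_le_vertexCoverNum_lineGraph X.G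
      _ ≤ 2 * (2 * (X.iter 2).domNum) + X.n := by
          gcongr
          exact X.line.vertexCoverNum_le_two_mul_domNum_line
  norm_cast at h
  lia

end FGraph

theorem domNum_iter_two_gt_general (X : FGraph) [Finite X.V] (h4 : 4 ≤ X.minDeg) :
    X.domNum < (X.iter 2).domNum := by
  have hpos : 0 < X.minDeg := by lia
  have := FGraph.nonempty_of_minDeg_pos hpos
  have hn : 0 < X.n := Nat.card_pos
  have hore : 2 * X.domNum ≤ X.n :=
    FGraph.two_mul_domNum_le_n (FGraph.neighborSet_nonempty_of_minDeg_pos hpos)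
  have hline : 4 * X.n ≤ 4 * (X.iter 2).domNum + X.n :=
    calc 4 * X.n ≤ X.minDeg * X.n := Nat.mul_le_mul_right _ h4
      _ ≤ 2 * X.e := X.minDeg_mul_n_le_two_mul_e
      _ ≤ 4 * (X.iter 2).domNum + X.n := X.two_mul_e_le_four_mul_domNum_iter_two_add_n
  lia

/-- For a prolific graph with `δ(G) ≥ 4`, `γ(L²(G)) > γ(G)`. -/
theorem domNum_iter_two_gt (X : FGraph) [Finite X.V] (hp : X.Prolific)
    (h4 : 4 ≤ X.minDeg) : X.domNum < (X.iter 2).domNum :=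
  domNum_iter_two_gt_general X h4
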